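/- arXiv:0802.0584 — 2 statements merged into one kernel-verified Lean document; each statement's English description precedes it below -/
import Mathlib

section
/- Let u ∈ F₂, let m ≥ 0 be an integer, let ψ₁ be a chain of type (C1) containing at least ‖u‖+1 factors of σ, and set ψ = τ^m σ ψ₁ (so that ψ is a chain of type (C1) containing at least ‖u‖+2 factors of σ). Then, as integers, ‖τψ(u)‖ − ‖ψ(u)‖ = ‖τ·τ^m ψ₁(u)‖ − ‖τ^m ψ₁(u)‖ + ‖σψ₁(u)‖ − ‖ψ₁(u)‖. -/
noncomputable section

/-- The free group of rank two. -/
abbrev F : Type := FreeGroup (Fin 2)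

/-- The generator `a`. -/
def ga : F := FreeGroup.of 0

/-- The generator `b`. -/
def gb : F := FreeGroup.of 1

/-- Build an automorphism of `F` from images of the generators together with
an explicit inverse. -/
def mkAut (x y xi yi : F)
    (h1 : FreeGroup.lift ![xi, yi] x = ga)
    (h2 : FreeGroup.lift ![xi, yi] y = gb)
    (h3 : FreeGroup.lift ![x, y] xi = ga)
    (h4 : FreeGroup.lift ![x, y] yi = gb) : MulAut F :=
  MonoidHom.toMulEquiv (FreeGroup.lift ![x, y]) (FreeGroup.lift ![xi, yi])
    (by
      ext i
      fin_cases i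
      · simpa [ga] using h1
      · simpa [gb] using h2)
    (by
      ext i
      fin_cases i
      · simpa [ga] using h3
      · simpa [gb] using h4)

/-- `σ : a ↦ ab, b ↦ b`. -/
def σ : MulAut F :=
  mkAut (ga * gb) gb (ga * gb⁻¹) gb
    (by simp [ga, gb]) (by simp [ga, gb]) (by simp [ga, gb]) (by simp [ga, gb])

/-- `τ : a ↦ a, b ↦ ba`. -/
def τ : MulAut F :=
  mkAut ga (gb * ga) ga (gb * ga⁻¹)
    (by simp [ga, gb]) (by simp [ga, gb]) (by simp [ga, gb]) (by simp [ga, gb])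

/-- `δ₁ : a ↦ b⁻¹ab, b ↦ b`. -/
def δ₁ : MulAut F :=
  mkAut (gb⁻¹ * ga * gb) gb (gb * ga * gb⁻¹) gb
    (by simp [ga, gb, mul_assoc]) (by simp [ga, gb]) (by simp [ga, gb, mul_assoc]) (by simp [ga, gb])

/-- `δ₂ : a ↦ bab⁻¹, b ↦ b`. -/
def δ₂ : MulAut F :=
  mkAut (gb * ga * gb⁻¹) gb (gb⁻¹ * ga * gb) gb
    (by simp [ga, gb, mul_assoc]) (by simp [ga, gb]) (by simp [ga, gb, mul_assoc]) (by simp [ga, gb])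

/-- `δ₃ : a ↦ a, b ↦ a⁻¹ba`. -/
def δ₃ : MulAut F :=
  mkAut ga (ga⁻¹ * gb * ga) ga (ga * gb * ga⁻¹)
    (by simp [ga, gb]) (by simp [ga, gb, mul_assoc]) (by simp [ga, gb]) (by simp [ga, gb, mul_assoc])

/-- `δ₄ : a ↦ a, b ↦ aba⁻¹`. -/
def δ₄ : MulAut F :=
  mkAut ga (ga * gb * ga⁻¹) ga (ga⁻¹ * gb * ga)
    (by simp [ga, gb]) (by simp [ga, gb, mul_assoc]) (by simp [ga, gb]) (by simp [ga, gb, mul_assoc])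

/-- `π : a ↦ b, b ↦ a⁻¹`. -/
def pi' : MulAut F :=
  mkAut gb ga⁻¹ gb⁻¹ ga
    (by simp [ga, gb]) (by simp [ga, gb]) (by simp [ga, gb]) (by simp [ga, gb])

/-- Word length of (the reduced word representing) an element of `F`. -/
def len (w : F) : ℕ := w.toWord.length

/-- Cyclic length: minimal word length among all conjugates. -/
def cyclen (w : F) : ℕ := sInf {n | ∃ g : F, len (g * w * g⁻¹) = n}

/-- The chain `τ^{m_k}σ^{l_k}⋯τ^{m_1}σ^{l_1}` of type (C1) determined by the list
`[(l_k, m_k), …, (l_1, m_1)]` of pairs of exponents. -/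
def chainC1 (c : List (ℕ × ℕ)) : MulAut F :=
  (c.map fun p => τ ^ p.2 * σ ^ p.1).prod

/-- The chain `τ^{-m_k}σ^{-l_k}⋯τ^{-m_1}σ^{-l_1}` of type (C2) determined by the list
`[(l_k, m_k), …, (l_1, m_1)]` of pairs of exponents. -/
def chainC2 (c : List (ℕ × ℕ)) : MulAut F :=
  (c.map fun p => (τ ^ p.2)⁻¹ * (σ ^ p.1)⁻¹).prod

/-- Number of factors of `σ` in a chain. -/
def sigmaCount (c : List (ℕ × ℕ)) : ℕ := (c.map Prod.fst).sum

/-- Number of factors of `τ` in a chain. -/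
def tauCount (c : List (ℕ × ℕ)) : ℕ := (c.map Prod.snd).sum

/-- The length `Σ (l_i + m_i)` of a chain. -/
def chainLen (c : List (ℕ × ℕ)) : ℕ := sigmaCount c + tauCount c

/-- A Whitehead automorphism of type (W1): it permutes `{a, a⁻¹, b, b⁻¹}`. -/
def IsW1 (β : MulAut F) : Prop :=
  β ga ∈ ({ga, ga⁻¹, gb, gb⁻¹} : Set F) ∧ β gb ∈ ({ga, ga⁻¹, gb, gb⁻¹} : Set F)

/-- A chain of type (C1). -/
def IsC1 (φ : MulAut F) : Prop := ∃ c : List (ℕ × ℕ), c ≠ [] ∧ φ = chainC1 c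

/-- A chain of type (C2). -/
def IsC2 (φ : MulAut F) : Prop := ∃ c : List (ℕ × ℕ), c ≠ [] ∧ φ = chainC2 c

/-- A positive element: a product of the generators `a` and `b`. -/
def IsPositive (w : F) : Prop := w ∈ Submonoid.closure ({ga, gb} : Set F)

/-- The four automorphisms `δ₁, δ₂, δ₃, δ₄`. -/
def δIdx : Fin 4 → MulAut F := ![δ₁, δ₂, δ₃, δ₄]


/-! ### Segments: positive words, read with a sign -/

/-- The letters of a segment `p`, all with the sign `s`. -/
def seg (s : Bool) (p : List (Fin 2)) : List (Fin 2 × Bool) := p.map fun i => (i, s)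

/-- The word of an alternating list of segments whose first sign is `s`. -/
def wd : Bool → List (List (Fin 2)) → List (Fin 2 × Bool)
  | _, [] => []
  | s, p :: L => seg s p ++ wd (!s) L

/-- Segmentwise action of the elementary automorphism attached to the letter `x`. -/
def hat (x : Fin 2) : List (Fin 2) → List (Fin 2)
  | [] => []
  | [y] => if y = x then [] else [y]
  | y :: z :: l => if y = x then y :: hat x (z :: l) else y :: x :: hat x (z :: l)

/-- Compatibility of neighbouring segments. -/
def nb (p q : List (Fin 2)) : Prop := p.getLast? ≠ q.head?

structure IsPhi (φ : MulAut F) (x : Fin 2) : Prop where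
  self : φ (FreeGroup.of x) = FreeGroup.of x
  other : ∀ y, y ≠ x → φ (FreeGroup.of y) = FreeGroup.of y * FreeGroup.of x

theorem isPhi_sigma : IsPhi σ 1 := by
  constructor
  · simp [σ, mkAut, gb]
  · intro y hy
    have : y = 0 := by omega
    subst this
    simp [σ, mkAut, ga, gb]

theorem isPhi_tau : IsPhi τ 0 := by
  constructor
  · simp [τ, mkAut, ga]
  · intro y hy
    have : y = 1 := by omega
    subst this
    simp [τ, mkAut, ga, gb]

theorem mk_cons_true (y : Fin 2) (l) :
    FreeGroup.mk ((y, true) :: l) = FreeGroup.of y * FreeGroup.mk l := by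
  simp [FreeGroup.of, FreeGroup.mul_mk]

theorem mk_cons_false (y : Fin 2) (l) :
    FreeGroup.mk ((y, false) :: l) = (FreeGroup.of y)⁻¹ * FreeGroup.mk l := by
  simp [FreeGroup.of, FreeGroup.mul_mk, FreeGroup.inv_mk, FreeGroup.invRev]

/-- Correction factor. -/
def pre (x : Fin 2) (s : Bool) : F := if s then 1 else (FreeGroup.of x)⁻¹

theorem phi_seg {φ : MulAut F} {x : Fin 2} (h : IsPhi φ x) (s : Bool) (p : List (Fin 2))
    (hp : p ≠ []) :
    φ (FreeGroup.mk (seg s p)) = pre x s * FreeGroup.mk (seg s (hat x p)) * (pre x (!s))⁻¹ := by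
  induction p with
  | nil => exact absurd rfl hp
  | cons y l ih =>
    cases l with
    | nil =>
      have h1 : FreeGroup.mk ([] : List (Fin 2 × Bool)) = 1 := rfl
      by_cases hy : y = x
      · subst hy
        cases s <;> simp [seg, hat, pre, mk_cons_true, mk_cons_false, h1, h.self]
      · cases s <;> simp [seg, hat, hy, pre, mk_cons_true, mk_cons_false, h1, h.other y hy]
    | cons z l =>
      have ih := ih (by simp)
      have e : ∀ q, seg s (y :: q) = (y, s) :: seg s q := fun _ => rfl
      have e' : ∀ q, seg s (x :: q) = (x, s) :: seg s q := fun _ => rfl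
      by_cases hy : y = x
      · subst hy
        simp only [hat, if_true]
        rw [e, e]
        cases s
        · rw [mk_cons_false, mk_cons_false, map_mul, ih]
          simp [pre, h.self, mul_assoc]
        · rw [mk_cons_true, mk_cons_true, map_mul, ih]
          simp [pre, h.self, mul_assoc]
      · simp only [hat, hy, if_false]
        rw [e, e, e']
        cases s
        · rw [mk_cons_false, mk_cons_false, mk_cons_false, map_mul, ih]
          simp [pre, h.other y hy, mul_assoc]
        · rw [mk_cons_true, mk_cons_true, mk_cons_true, map_mul, ih]
          simp [pre, h.other y hy, mul_assoc]

theorem phi_wd {φ : MulAut F} {x : Fin 2} (h : IsPhi φ x) (L : List (List (Fin 2))) :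
    ∀ (s : Bool), [] ∉ L →
    φ (FreeGroup.mk (wd s L)) =
      pre x s * FreeGroup.mk (wd s (L.map (hat x))) * (pre x (not^[L.length] s))⁻¹ := by
  induction L with
  | nil =>
    intro s _
    have h1 : FreeGroup.mk ([] : List (Fin 2 × Bool)) = 1 := rfl
    simp [wd, h1]
  | cons p L ih =>
    intro s hL
    simp only [List.mem_cons, not_or] at hL
    simp only [wd, List.map_cons, List.length_cons, Function.iterate_succ, Function.comp]
    rw [← FreeGroup.mul_mk, ← FreeGroup.mul_mk, map_mul, ih _ hL.2, phi_seg h s p (Ne.symm hL.1)]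
    group

theorem not_iter_even {n : ℕ} (hn : Even n) (s : Bool) : not^[n] s = s := by
  obtain ⟨k, rfl⟩ := hn
  rw [← two_mul, Function.iterate_mul]
  have : not^[2] = id := by funext b; cases b <;> rfl
  rw [this]; simp

theorem phi_conj {φ : MulAut F} {x : Fin 2} (h : IsPhi φ x) (L : List (List (Fin 2)))
    (s : Bool) (hL : [] ∉ L) (he : Even L.length) :
    IsConj (φ (FreeGroup.mk (wd s L))) (FreeGroup.mk (wd s (L.map (hat x)))) := by
  rw [phi_wd h L s hL, not_iter_even he]
  exact (isConj_iff.2 ⟨_, rfl⟩ : IsConj _ _).symm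

theorem wd_append (L M : List (List (Fin 2))) : ∀ s,
    wd s (L ++ M) = wd s L ++ wd (not^[L.length] s) M := by
  induction L with
  | nil => intro s; simp [wd]
  | cons p L ih => intro s; simp [wd, ih]

theorem conj_rot (u v : List (Fin 2 × Bool)) :
    IsConj (FreeGroup.mk (u ++ v)) (FreeGroup.mk (v ++ u)) := by
  rw [← FreeGroup.mul_mk, ← FreeGroup.mul_mk]
  refine isConj_iff.2 ⟨(FreeGroup.mk u)⁻¹, ?_⟩
  group

theorem wd_rot (s : Bool) (L M : List (List (Fin 2))) (he : Even (L ++ M).length) :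
    ∃ s', IsConj (FreeGroup.mk (wd s (L ++ M))) (FreeGroup.mk (wd s' (M ++ L))) := by
  refine ⟨not^[L.length] s, ?_⟩
  have h1 : not^[M.length] (not^[L.length] s) = s := by
    rw [← Function.iterate_add_apply]
    exact not_iter_even (by simpa [add_comm] using he) s
  rw [wd_append, wd_append, h1]
  exact conj_rot _ _

theorem wd_isRotated (s : Bool) {L M : List (List (Fin 2))} (h : L ~r M) (he : Even L.length) :
    ∃ s', IsConj (FreeGroup.mk (wd s L)) (FreeGroup.mk (wd s' M)) := by
  obtain ⟨n, hn⟩ := h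
  have h1 := List.rotate_eq_drop_append_take_mod (l := L) (n := n)
  rw [hn] at h1
  have h2 := List.take_append_drop (n % L.length) L
  rw [h1]
  conv in wd s L => rw [← h2]
  exact wd_rot _ _ _ (by rw [h2]; exact he)

/-- Removing an empty segment. -/
theorem dead_step (s : Bool) (L : List (List (Fin 2))) (he : Even L.length) (hd : [] ∈ L) :
    (∃ y s', L ~r [[], y] ∧ IsConj (FreeGroup.mk (wd s L)) (FreeGroup.mk (seg s' y))) ∨
    (∃ x y M s', L ~r ([] :: y :: (M ++ [x])) ∧
      IsConj (FreeGroup.mk (wd s L)) (FreeGroup.mk (wd s' ((x ++ y) :: M)))) := by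
  obtain ⟨L1, L2, rfl⟩ := List.append_of_mem hd
  have hr : (L1 ++ [] :: L2) ~r ([] :: L2 ++ L1) := List.isRotated_append
  obtain ⟨s1, hs1⟩ := wd_isRotated s hr he
  have hl := hr.perm.length_eq
  rw [hl] at he
  simp only [List.cons_append] at hs1 he hr
  generalize L2 ++ L1 = N at *
  cases N with
  | nil => simp at he
  | cons y N =>
    rcases List.eq_nil_or_concat N with rfl | ⟨M, x, rfl⟩
    · left
      exact ⟨y, !s1, hr, by simpa [wd, seg] using hs1⟩
    · right
      rw [List.concat_eq_append] at *
      refine ⟨x, y, M, !s1, hr, hs1.trans ?_⟩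
      have h2 : Even (M.length + 1) := by
        simp [Nat.even_add_one, ] at he ⊢; exact he
      have h3 : not^[M.length] s1 = !s1 := by
        have := not_iter_even h2 s1
        rw [Function.iterate_succ_apply'] at this
        rw [Bool.eq_not_iff]; intro h; rw [h] at this; simp at this
      have e1 : wd s1 ([] :: y :: (M ++ [x])) = (seg (!s1) y ++ wd s1 M) ++ seg (!s1) x := by
        simp [wd, wd_append, seg, h3]
      have e2 : wd (!s1) ((x ++ y) :: M) = seg (!s1) x ++ (seg (!s1) y ++ wd s1 M) := by
        simp [wd, seg]
      rw [e1, e2]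
      exact conj_rot _ _

/-- Sum of a statistic over a list of segments. -/
def S (f : List (Fin 2) → ℕ) (L : List (List (Fin 2))) : ℕ := (L.map f).sum

theorem S_perm (f) {L M : List (List (Fin 2))} (h : L.Perm M) : S f L = S f M :=
  (h.map f).sum_eq

theorem S_congr {f g : List (Fin 2) → ℕ} {L : List (List (Fin 2))} (h : ∀ p ∈ L, f p = g p) :
    S f L = S g L := by
  unfold S
  rw [List.map_congr_left h]

theorem S_le {f g : List (Fin 2) → ℕ} {L : List (List (Fin 2))} (h : ∀ p ∈ L, f p ≤ g p) :
    S f L ≤ S g L := List.sum_le_sum h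

theorem S_map (f) (g : List (Fin 2) → List (Fin 2)) (L : List (List (Fin 2))) :
    S f (L.map g) = S (fun p => f (g p)) L := by
  simp [S, Function.comp_def]

theorem S_zero {f : List (Fin 2) → ℕ} {L : List (List (Fin 2))} (h : ∀ p ∈ L, f p = 0) :
    S f L = 0 := by
  rw [S_congr h]; simp [S]

theorem S_cons (f) (p) (L : List (List (Fin 2))) : S f (p :: L) = f p + S f L := by
  simp [S]

/-- Weight of a segment that is a pure power of `b`. -/
def tb (p : List (Fin 2)) : ℕ := if p.count 0 = 0 then p.count 1 else 0

/-- Indicator of the empty segment. -/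
def dd (p : List (Fin 2)) : ℕ := if p = [] then 1 else 0

/-- Segments containing both letters. -/
def mixed (p : List (Fin 2)) : Prop := 0 < p.count 0 ∧ 0 < p.count 1

/-- Cyclically reduced lists of segments. -/
structure Valid (L : List (List (Fin 2))) : Prop where
  even : Even L.length
  ne : [] ∉ L
  chain : Cycle.Chain nb (L : Cycle (List (Fin 2)))

theorem count_add (p : List (Fin 2)) : p.count 0 + p.count 1 = p.length := by
  induction p with
  | nil => rfl
  | cons y l ih =>
    have : y = 0 ∨ y = 1 := by omega
    rcases this with rfl | rfl <;> simp <;> omega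

theorem chain_merge {x y : List (Fin 2)} {M : List (List (Fin 2))}
    (h : Cycle.Chain nb (([] :: y :: (M ++ [x]) : List (List (Fin 2))) : Cycle _)) :
    x ≠ [] ∧ y ≠ [] ∧ Cycle.Chain nb (((x ++ y) :: M : List (List (Fin 2))) : Cycle _) := by
  rw [Cycle.chain_coe_cons] at h
  have h1 : List.IsChain nb ([] :: y :: (M ++ [x] ++ [[]])) := by simpa using h
  rw [List.isChain_cons_cons] at h1
  obtain ⟨h2, h3⟩ := h1
  have hy : y ≠ [] := by
    rintro rfl; simp [nb] at h2
  have h4 : List.IsChain nb ((y :: M) ++ x :: [[]]) := by simpa using h3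
  rw [List.isChain_split] at h4
  obtain ⟨h5, h6⟩ := h4
  have hx : x ≠ [] := by
    rintro rfl; simp [nb] at h6
  refine ⟨hx, hy, ?_⟩
  rw [Cycle.chain_coe_cons]
  have e1 : ∀ z, nb y z → nb (x ++ y) z := by
    intro z hz
    simpa [nb, List.getLast?_append_of_ne_nil _ hy] using hz
  have e2 : ∀ z, nb z x → nb z (x ++ y) := by
    intro z hz
    simpa [nb, List.head?_append_of_ne_nil _ hx] using hz
  have h7 : List.IsChain nb (((x ++ y) :: M) ++ [x]) :=
    List.IsChain.imp_head (fun {z} hz => e1 z hz) h5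
  have h8 : List.IsChain nb (((x ++ y) :: M) ++ [x ++ y]) := by
    rw [List.isChain_append] at h7 ⊢
    refine ⟨h7.1, by simp, ?_⟩
    intro p hp q hq
    simp at hq
    subst hq
    exact e2 _ (h7.2.2 p hp x (by simp))
  simpa using h8

theorem tb_append (x y : List (Fin 2)) : tb (x ++ y) ≤ tb x + tb y := by
  simp only [tb, List.count_append]
  split_ifs <;> omega

theorem merge (n : ℕ) : ∀ (L : List (List (Fin 2))) (s : Bool), L.length = n → Even L.length →
    Cycle.Chain nb (L : Cycle (List (Fin 2))) →
    (∃ y s', IsConj (FreeGroup.mk (wd s L)) (FreeGroup.mk (seg s' y)) ∧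
      (∀ i, y.count i = S (List.count i) L) ∧ L.length = 2 * S dd L) ∨
    (∃ L' s', Valid L' ∧ IsConj (FreeGroup.mk (wd s L)) (FreeGroup.mk (wd s' L')) ∧
      (∀ i, S (List.count i) L' = S (List.count i) L) ∧ L'.length + 2 * S dd L = L.length ∧
      S tb L' ≤ S tb L ∧ ((∀ p ∈ L, p = [] ∨ mixed p) → ∀ p ∈ L', mixed p)) := by
  induction n using Nat.strong_induction_on with
  | _ n ih =>
  intro L s hn he hc
  by_cases hd : [] ∈ L
  · rcases dead_step s L he hd with ⟨y, s', hr, hy⟩ | ⟨x, y, M, s', hr, hy⟩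
    · left
      have hc' := hc
      rw [Cycle.coe_eq_coe.2 hr, Cycle.chain_coe_cons] at hc'
      have hy0 : y ≠ [] := by
        rintro rfl; simp [nb] at hc'
      refine ⟨y, s', hy, fun i => ?_, ?_⟩
      · rw [S_perm _ hr.perm]; simp [S]
      · rw [hr.perm.length_eq, S_perm _ hr.perm]; simp [S, dd, hy0]
    · have hc' := hc
      rw [Cycle.coe_eq_coe.2 hr] at hc'
      obtain ⟨hx0, hy0, hc2⟩ := chain_merge hc'
      have hlen := hr.perm.length_eq
      have hperm : L.Perm ([] :: x :: y :: M) := by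
        refine hr.perm.trans (List.Perm.cons _ ?_)
        refine (List.Perm.cons y (List.perm_append_singleton x M)).trans (List.Perm.swap _ _ _)
      simp only [List.length_cons, List.length_append, List.length_nil] at hlen
      have he2 : Even ((x ++ y) :: M).length := by
        rw [hlen] at he
        simp only [List.length_cons]
        rw [show M.length + (0 + 1) + 1 + 1 = (M.length + 1) + 2 by ring] at he
        exact (Nat.even_add.1 he).2 (by decide)
      have hdd : S dd L = 1 + S dd ((x ++ y) :: M) := by
        rw [S_perm _ hperm]; simp [S, dd, hx0, hy0]
      have hcount : ∀ i, S (List.count i) ((x ++ y) :: M) = S (List.count i) L := by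
        intro i
        rw [S_perm _ hperm]; simp [S]; ring
      have htb : S tb ((x ++ y) :: M) ≤ S tb L := by
        rw [S_perm _ hperm]
        have := tb_append x y
        simp only [S_cons]; omega
      have hmix : (∀ p ∈ L, p = [] ∨ mixed p) → ∀ p ∈ (x ++ y) :: M, p = [] ∨ mixed p := by
        intro h p hp
        rw [List.mem_cons] at hp
        rcases hp with rfl | hp
        · right
          have h1 := (h x (hperm.mem_iff.2 (by simp))).resolve_left hx0
          simp only [mixed, List.count_append] at h1 ⊢
          omega
        · exact h p (hperm.mem_iff.2 (by simp [hp]))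
      have hl2 : ((x ++ y) :: M).length + 2 = L.length := by
        simp only [List.length_cons]; omega
      rcases ih _ (by omega) ((x ++ y) :: M) s' rfl he2 hc2 with
        ⟨y', s2, h1, h2, h3⟩ | ⟨L', s2, h1, h2, h3, h4, h5, h6⟩
      · left
        refine ⟨y', s2, hy.trans h1, fun i => (h2 i).trans (hcount i), by omega⟩
      · right
        exact ⟨L', s2, h1, hy.trans h2, fun i => (h3 i).trans (hcount i), by omega, by omega,
          fun h => h6 (hmix h)⟩
  · right
    refine ⟨L, s, ⟨he, hd, hc⟩, IsConj.refl _, fun _ => rfl, ?_, le_rfl, ?_⟩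
    · rw [S_zero]
      · simp
      · intro p hp
        have : p ≠ [] := by rintro rfl; exact hd hp
        simp [dd, this]
    · intro h p hp
      refine (h p hp).resolve_left ?_
      rintro rfl; exact hd hp

/-! ### Properties of `hat` -/

theorem hat_count_other (x y : Fin 2) (hy : y ≠ x) (p : List (Fin 2)) :
    (hat x p).count y = p.count y := by
  induction p with
  | nil => rfl
  | cons z l ih =>
    cases l with
    | nil =>
      by_cases hz : z = x
      · subst hz; simp [hat, hy.symm]
      · simp [hat, hz]
    | cons w l =>
      by_cases hz : z = x
      · subst hz; simp only [hat, if_true]; rw [List.count_cons, ih, List.count_cons (b := z)]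
      · simp only [hat, hz, if_false]
        rw [List.count_cons, List.count_cons, ih, List.count_cons (b := z)]
        simp [hy.symm]

theorem hat_count_self (x : Fin 2) (p : List (Fin 2)) (hp : p ≠ []) :
    (hat x p).count x + 1 = p.count 0 + p.count 1 := by
  rw [count_add]
  induction p with
  | nil => exact absurd rfl hp
  | cons z l ih =>
    cases l with
    | nil =>
      by_cases hz : z = x
      · subst hz; simp [hat]
      · simp [hat, hz]
    | cons w l =>
      have ih := ih (by simp)
      by_cases hz : z = x
      · subst hz; simp only [hat, if_true]; rw [List.count_cons_self, List.length_cons]; omega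
      · simp only [hat, hz, if_false]
        rw [List.count_cons_of_ne hz, List.count_cons_self, List.length_cons]; omega

theorem hat_nil {x : Fin 2} {p : List (Fin 2)} (hp : p ≠ []) (h : hat x p = []) : p = [x] := by
  match p with
  | [] => exact absurd rfl hp
  | [y] =>
    by_cases hy : y = x
    · rw [hy]
    · simp [hat, hy] at h
  | y :: z :: l => 
    by_cases hy : y = x <;> simp [hat, hy] at h

theorem hat_head (x : Fin 2) (p : List (Fin 2)) (h : hat x p ≠ []) :
    (hat x p).head? = p.head? := by
  match p with
  | [] => rfl
  | [y] =>
    by_cases hy : y = x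
    · simp [hat, hy] at h
    · simp [hat, hy]
  | y :: z :: l => 
    by_cases hy : y = x <;> simp [hat, hy]

theorem hat_last (x : Fin 2) (p : List (Fin 2)) (h : hat x p ≠ []) :
    (hat x p).getLast? = p.getLast? := by
  induction p with
  | nil => rfl
  | cons z l ih =>
    cases l with
    | nil =>
      by_cases hz : z = x
      · simp [hat, hz] at h
      · simp [hat, hz]
    | cons w l =>
      by_cases h0 : hat x (w :: l) = []
      · have := hat_nil (by simp) h0
        simp only [List.cons.injEq] at this
        obtain ⟨rfl, rfl⟩ := this
        by_cases hz : z = w <;> simp [hat, hz]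
      · have ih := ih h0
        have e : (z :: w :: l).getLast? = (w :: l).getLast? := by simp
        rw [e, ← ih]
        obtain ⟨q, r, hq⟩ := List.exists_cons_of_ne_nil h0
        by_cases hz : z = x
        · simp only [hat, hz, if_true, hq]; simp
        · simp only [hat, hz, if_false, hq]; simp

theorem nb_hat {x : Fin 2} {p q : List (Fin 2)} (hp : p ≠ []) (hq : q ≠ []) (h : nb p q) :
    nb (hat x p) (hat x q) := by
  unfold nb at *
  by_cases h1 : hat x p = []
  · have hp1 := hat_nil hp h1
    by_cases h2 : hat x q = []
    · have hq1 := hat_nil hq h2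
      subst hp1; subst hq1; simp at h
    · rw [h1]
      intro h3
      exact h2 (List.head?_eq_none_iff.1 h3.symm)
  · by_cases h2 : hat x q = []
    · rw [h2]; simpa using h1
    · rwa [hat_last x p h1, hat_head x q h2]

theorem chain_hat (x : Fin 2) {L : List (List (Fin 2))} (hL : Valid L) :
    Cycle.Chain nb ((L.map (hat x) : List (List (Fin 2))) : Cycle (List (Fin 2))) := by
  obtain ⟨_, hne, hc⟩ := hL
  cases L with
  | nil => simp
  | cons p L =>
    rw [List.map_cons, Cycle.chain_coe_cons]
    rw [Cycle.chain_coe_cons] at hc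
    have : hat x p :: (L.map (hat x) ++ [hat x p]) = (p :: (L ++ [p])).map (hat x) := by simp
    rw [this, List.isChain_map]
    refine hc.imp_of_mem_imp ?_
    intro a b ha hb hab
    have hm : ∀ a, a ∈ p :: (L ++ [p]) → a ≠ [] := by
      rintro a ha rfl
      apply hne
      simp at ha ⊢
      tauto
    exact nb_hat (hm a ha) (hm b hb) hab

/-! ### Cyclic length -/

theorem cyclen_conj {w v : F} (h : IsConj w v) : cyclen w = cyclen v := by
  obtain ⟨c, rfl⟩ := isConj_iff.1 h
  unfold cyclen
  congr 1
  ext n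
  constructor
  · rintro ⟨g, hg⟩
    exact ⟨g * c⁻¹, by rw [← hg]; congr 1; group⟩
  · rintro ⟨g, hg⟩
    exact ⟨g * c, by rw [← hg]; congr 1; group⟩

theorem exists_cyclen (w : F) : ∃ v, IsConj w v ∧ len v = cyclen w := by
  have h : {n | ∃ g : F, len (g * w * g⁻¹) = n}.Nonempty := ⟨_, 1, rfl⟩
  obtain ⟨g, hg⟩ := Nat.sInf_mem h
  exact ⟨_, isConj_iff.2 ⟨g, rfl⟩, hg⟩

theorem len_mul (v w : F) : len (v * w) ≤ len v + len w := FreeGroup.norm_mul_le v w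

theorem len_inv (v : F) : len v⁻¹ = len v := FreeGroup.norm_inv_eq

theorem len_pow (v : F) (n : ℕ) : len (v ^ n) ≤ n * len v := by
  induction n with
  | zero => simp [len]
  | succ n ih =>
    rw [pow_succ]
    have := len_mul (v ^ n) v
    nlinarith

theorem cyclen_mk {l : List (Fin 2 × Bool)} (h : FreeGroup.IsCyclicallyReduced l) :
    cyclen (FreeGroup.mk l) = l.length := by
  have hp : ∀ n : ℕ, len (FreeGroup.mk l ^ n) = n * l.length := by
    intro n
    unfold len
    rw [FreeGroup.toWord_pow, FreeGroup.toWord_mk, h.isReduced.reduce_eq,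
      (h.flatten_replicate n).isReduced.reduce_eq]
    simp
  apply le_antisymm
  · apply Nat.sInf_le
    refine ⟨1, ?_⟩
    have := hp 1
    simpa using this
  · obtain ⟨v, hv, hv2⟩ := exists_cyclen (FreeGroup.mk l)
    rw [← hv2]
    obtain ⟨c, hc⟩ := isConj_iff.1 hv.symm
    by_contra hlt
    push Not at hlt
    have h1 := hp (2 * len c + 1)
    rw [← hc, conj_pow] at h1
    have h2 := len_mul (c * v ^ (2 * len c + 1)) c⁻¹
    have h3 := len_mul c (v ^ (2 * len c + 1))
    have h4 := len_pow v (2 * len c + 1)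
    rw [len_inv] at h2
    nlinarith

theorem wd_length (L : List (List (Fin 2))) : ∀ s, (wd s L).length = S List.length L := by
  induction L with
  | nil => intro s; rfl
  | cons p L ih => intro s; simp [wd, S_cons, ih, seg]

theorem seg_reduced (s : Bool) (p : List (Fin 2)) : FreeGroup.IsReduced (seg s p) := by
  unfold FreeGroup.IsReduced seg
  rw [List.isChain_map]
  induction p with
  | nil => simp
  | cons y l ih => 
    cases l with
    | nil => simp
    | cons z l => rw [List.isChain_cons_cons]; exact ⟨fun _ => rfl, ih⟩

theorem wd_reduced (L : List (List (Fin 2))) : ∀ s, [] ∉ L → List.IsChain nb L →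
    FreeGroup.IsReduced (wd s L) := by
  induction L with
  | nil => intro s _ _; simp [wd]
  | cons p L ih =>
    intro s hne hc
    simp only [List.mem_cons, not_or] at hne
    unfold FreeGroup.IsReduced
    rw [wd, List.isChain_append]
    refine ⟨seg_reduced s p, ih _ hne.2 hc.tail, ?_⟩
    intro a ha b hb
    cases L with
    | nil => simp [wd] at hb
    | cons q L =>
      rw [List.isChain_cons_cons] at hc
      simp only [List.mem_cons, not_or] at hne
      have hq := List.head?_append_of_ne_nil (l₁ := seg (!s) q) (l₂ := wd (!(!s)) L)
        (by simpa [seg] using Ne.symm hne.2.1)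
      rw [wd, hq] at hb
      simp only [seg, List.getLast?_map, List.head?_map, Option.mem_def, Option.map_eq_some_iff]
        at ha hb
      obtain ⟨i, hi, rfl⟩ := ha
      obtain ⟨j, hj, rfl⟩ := hb
      intro hij
      simp only at hij
      subst hij
      exact absurd (hi.trans hj.symm) hc.1

theorem valid_cyc {L : List (List (Fin 2))} (h : Valid L) (s : Bool) :
    FreeGroup.IsCyclicallyReduced (wd s L) := by
  obtain ⟨he, hne, hc⟩ := h
  cases L with
  | nil => simp [wd]
  | cons p L =>
    rw [Cycle.chain_coe_cons] at hc
    have hr := wd_reduced ((p :: L) ++ [p]) s (by simp at hne ⊢; tauto) (by simpa using hc)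
    rw [wd_append, not_iter_even he] at hr
    unfold FreeGroup.IsReduced at hr
    rw [List.isChain_append] at hr
    refine ⟨hr.1, ?_⟩
    intro a ha b hb
    refine hr.2.2 a ha b ?_
    have hp : p ≠ [] := by rintro rfl; simp at hne
    have hq := List.head?_append_of_ne_nil (l₁ := seg s p) (l₂ := wd (!s) L)
        (by simpa [seg] using hp)
    rw [wd, hq] at hb
    simpa [wd] using hb

theorem S_length (L : List (List (Fin 2))) :
    S List.length L = S (List.count 0) L + S (List.count 1) L := by
  induction L with
  | nil => rfl
  | cons p L ih => simp only [S_cons, ih, ← count_add p]; ring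

theorem cyclen_valid {L : List (List (Fin 2))} (h : Valid L) (s : Bool) :
    cyclen (FreeGroup.mk (wd s L)) = S (List.count 0) L + S (List.count 1) L := by
  rw [cyclen_mk (valid_cyc h s), wd_length, S_length]

theorem cyclen_seg (s : Bool) (p : List (Fin 2)) :
    cyclen (FreeGroup.mk (seg s p)) = p.count 0 + p.count 1 := by
  rw [cyclen_mk, count_add]
  · simp [seg]
  · refine ⟨seg_reduced s p, ?_⟩
    intro a ha b hb _
    have h1 := List.mem_of_getLast? ha
    have h2 := List.mem_of_mem_head? hb
    simp only [seg, List.mem_map] at h1 h2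
    obtain ⟨_, _, rfl⟩ := h1
    obtain ⟨_, _, rfl⟩ := h2
    rfl

/-! ### Normalisation of an arbitrary alternating list -/

theorem not_chain_split {α : Type*} {r : α → α → Prop} {l : List α} (h : ¬ List.IsChain r l) :
    ∃ l1 x y l2, l = l1 ++ x :: y :: l2 ∧ ¬ r x y := by
  induction l with
  | nil => simp at h
  | cons a l ih =>
    cases l with
    | nil => simp at h
    | cons b l =>
      rw [List.isChain_cons_cons] at h
      by_cases hab : r a b
      · obtain ⟨l1, x, y, l2, h1, h2⟩ := ih (fun h' => h ⟨hab, h'⟩)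
        exact ⟨a :: l1, x, y, l2, by rw [h1]; rfl, h2⟩
      · exact ⟨[], a, b, l, rfl, hab⟩

theorem not_cyc_split {L : List (List (Fin 2))} (he : Even L.length)
    (h : ¬ Cycle.Chain nb (L : Cycle (List (Fin 2)))) :
    ∃ x y M, L ~r (x :: y :: M) ∧ ¬ nb x y := by
  cases L with
  | nil => simp at h
  | cons a l =>
    rw [Cycle.chain_coe_cons] at h
    obtain ⟨l1, x, y, l2, h1, h2⟩ := not_chain_split h
    rcases List.eq_nil_or_concat l2 with rfl | ⟨l2, z, rfl⟩
    · have h3 : (a :: l) ++ [a] = (l1 ++ [x]) ++ [y] := by simpa using h1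
      obtain ⟨h4, h5⟩ := List.append_inj' h3 rfl
      simp only [List.cons.injEq, and_true] at h5
      subst h5
      cases l1 with
      | nil =>
        simp at h4
        rw [h4.2] at he
        simp at he
      | cons b l1 =>
        simp only [List.cons_append, List.cons.injEq] at h4
        obtain ⟨rfl, rfl⟩ := h4
        refine ⟨x, a, l1, ?_, h2⟩
        have : (a :: l1) ++ [x] ~r [x] ++ (a :: l1) := List.isRotated_append
        simpa using this
    · have h3 : (a :: l) ++ [a] = (l1 ++ x :: y :: l2) ++ [z] := by simpa using h1
      obtain ⟨h4, h5⟩ := List.append_inj' h3 rfl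
      refine ⟨x, y, l2 ++ l1, ?_, h2⟩
      rw [h4]
      have : l1 ++ (x :: y :: l2) ~r (x :: y :: l2) ++ l1 := List.isRotated_append
      simpa using this

theorem normalise (n : ℕ) : ∀ (L : List (List (Fin 2))) (s : Bool),
    L.length + S List.length L = n → Even L.length →
    (∃ y s', IsConj (FreeGroup.mk (wd s L)) (FreeGroup.mk (seg s' y))) ∨
    (∃ L' s', Valid L' ∧ IsConj (FreeGroup.mk (wd s L)) (FreeGroup.mk (wd s' L')) ∧
      S List.length L' ≤ S List.length L) := by
  induction n using Nat.strong_induction_on with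
  | _ n ih =>
  intro L s hn he
  by_cases hd : [] ∈ L
  · rcases dead_step s L he hd with ⟨y, s', hr, hy⟩ | ⟨x, y, M, s', hr, hy⟩
    · left
      exact ⟨y, s', hy⟩
    · have hlen := hr.perm.length_eq
      simp only [List.length_cons, List.length_append, List.length_nil] at hlen
      have he2 : Even ((x ++ y) :: M).length := by
        rw [hlen] at he
        simp only [List.length_cons]
        rw [show M.length + (0 + 1) + 1 + 1 = (M.length + 1) + 2 by ring] at he
        exact (Nat.even_add.1 he).2 (by decide)
      have hS : S List.length ((x ++ y) :: M) = S List.length L := by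
        rw [S_perm _ hr.perm]; simp [S]; ring
      rcases ih _ (by simp only [List.length_cons]; omega) ((x ++ y) :: M) s' rfl he2 with
        ⟨y', s2, h1⟩ | ⟨L', s2, h1, h2, h3⟩
      · left
        exact ⟨y', s2, hy.trans h1⟩
      · right
        exact ⟨L', s2, h1, hy.trans h2, by omega⟩
  · by_cases hc : Cycle.Chain nb (L : Cycle (List (Fin 2)))
    · right
      exact ⟨L, s, ⟨he, hd, hc⟩, IsConj.refl _, le_rfl⟩
    · obtain ⟨x, y, M, hr, hxy⟩ := not_cyc_split he hc
      obtain ⟨s1, hs1⟩ := wd_isRotated s hr he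
      have hx : x ≠ [] := by
        rintro rfl; exact hd (hr.mem_iff.2 (by simp))
      have hy : y ≠ [] := by
        rintro rfl; exact hd (hr.mem_iff.2 (by simp))
      obtain ⟨z, y', rfl⟩ := List.exists_cons_of_ne_nil hy
      rcases List.eq_nil_or_concat x with rfl | ⟨x', z', rfl⟩
      · exact absurd rfl hx
      rw [List.concat_eq_append] at *
      have hz : z' = z := by simpa [nb] using hxy
      subst hz
      have hlen := hr.perm.length_eq
      simp only [List.length_cons] at hlen
      have hS : S List.length (x' :: y' :: M) + 2 = S List.length L := by
        rw [S_perm _ hr.perm]; simp [S]; ring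
      have hw : FreeGroup.mk (wd s1 ((x' ++ [z']) :: (z' :: y') :: M)) =
          FreeGroup.mk (wd s1 (x' :: y' :: M)) := by
        have : FreeGroup.Red.Step (seg s1 x' ++ (z', s1) :: (z', !s1) :: (seg (!s1) y' ++ wd s1 M))
          (seg s1 x' ++ (seg (!s1) y' ++ wd s1 M)) := FreeGroup.Red.Step.not
        have h2 : (FreeGroup.mk _ : F) = FreeGroup.mk _ := Quot.sound this
        simpa [wd, seg] using h2
      rcases ih _ (by simp only [List.length_cons]; omega) (x' :: y' :: M) s1 rfl
        (by simp only [List.length_cons]; rw [← hlen]; exact he) with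
        ⟨y', s2, h1⟩ | ⟨L', s2, h1, h2, h3⟩
      · left
        exact ⟨y', s2, hs1.trans (hw ▸ h1)⟩
      · right
        exact ⟨L', s2, h1, hs1.trans (hw ▸ h2), by omega⟩

/-- Every word is the word of an alternating list. -/
theorem exists_list (l : List (Fin 2 × Bool)) :
    ∃ L, Even L.length ∧ wd true L = l ∧ S List.length L = l.length := by
  induction l with
  | nil => exact ⟨[], by simp, rfl, rfl⟩
  | cons a l ih =>
    obtain ⟨L, h1, h2, h3⟩ := ih
    obtain ⟨i, s⟩ := a
    cases s
    · refine ⟨[] :: [i] :: L, ?_, by simp [wd, seg, h2], by simp [S_cons, h3, add_comm]⟩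
      simpa [Nat.even_add_one] using h1
    · refine ⟨[i] :: [] :: L, ?_, by simp [wd, seg, h2], by simp [S_cons, h3, add_comm]⟩
      simpa [Nat.even_add_one] using h1

/-! ### The two kinds of normal forms -/

theorem phi_isConj (φ : MulAut F) {w v : F} (h : IsConj w v) : IsConj (φ w) (φ v) := by
  obtain ⟨c, rfl⟩ := isConj_iff.1 h
  exact isConj_iff.2 ⟨φ c, by simp⟩

theorem phi_mono {φ : MulAut F} {x : Fin 2} (h : IsPhi φ x) {w : F} {s : Bool}
    {y : List (Fin 2)} (hw : IsConj w (FreeGroup.mk (seg s y))) :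
    ∃ y', IsConj (φ w) (FreeGroup.mk (seg s y')) ∧ y'.count x = y.count 0 + y.count 1 ∧
      ∀ z, z ≠ x → y'.count z = y.count z := by
  have hw' := phi_isConj φ hw
  by_cases hy : y = []
  · subst hy
    refine ⟨[], hw'.trans ?_, by simp, by simp⟩
    have h1 : FreeGroup.mk (seg s []) = 1 := rfl
    rw [h1, map_one]
  · rw [phi_seg h s y hy] at hw'
    have h1 : FreeGroup.mk ([] : List (Fin 2 × Bool)) = 1 := rfl
    refine ⟨x :: hat x y, hw'.trans ?_, ?_, ?_⟩
    · cases s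
      · simp only [seg, List.map_cons, mk_cons_false, pre]
        exact isConj_iff.2 ⟨1, by simp⟩
      · simp only [seg, List.map_cons, mk_cons_true, pre]
        refine isConj_iff.2 ⟨FreeGroup.of x, ?_⟩
        simp [mul_assoc]
    · rw [List.count_cons_self, hat_count_self x y hy]
    · intro z hz
      rw [List.count_cons_of_ne (Ne.symm hz), hat_count_other x z hz]

theorem S_hat_self (x : Fin 2) {L : List (List (Fin 2))} (hL : [] ∉ L) :
    S (List.count x) (L.map (hat x)) + L.length = S (List.count 0) L + S (List.count 1) L := by
  induction L with
  | nil => rfl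
  | cons p L ih =>
    simp only [List.mem_cons, not_or] at hL
    have := hat_count_self x p (Ne.symm hL.1)
    have := ih hL.2
    simp only [List.map_cons, S_cons, List.length_cons]
    omega

theorem S_hat_other (x y : Fin 2) (hy : y ≠ x) (L : List (List (Fin 2))) :
    S (List.count y) (L.map (hat x)) = S (List.count y) L := by
  rw [S_map]
  exact S_congr fun p _ => hat_count_other x y hy p

/-- Indicator of the segment `a`. -/
def ee (p : List (Fin 2)) : ℕ := if p.count 0 = 1 ∧ p.count 1 = 0 then 1 else 0

/-- The words `w` that are controlled up to `t`. -/
def TRep (w : F) (t : ℕ) : Prop :=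
  (∃ y s, IsConj w (FreeGroup.mk (seg s y))) ∨
  ∃ L s, Valid L ∧ IsConj w (FreeGroup.mk (wd s L)) ∧ S tb L ≤ t

/-- Good normal forms together with their statistics. -/
def GRep (w : F) (α β c e : ℤ) : Prop :=
  (∃ y s, IsConj w (FreeGroup.mk (seg s y)) ∧ (y.count 0 : ℤ) = α ∧ (y.count 1 : ℤ) = β ∧
    c = 0 ∧ e = 0) ∨
  ∃ L s, Valid L ∧ IsConj w (FreeGroup.mk (wd s L)) ∧ (S (List.count 0) L : ℤ) = α ∧
    (S (List.count 1) L : ℤ) = β ∧ (L.length : ℤ) = 2 * c ∧ (S ee L : ℤ) = e ∧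
    ∀ p ∈ L, (p.count 0 = 1 ∧ p.count 1 = 0) ∨ mixed p

theorem GRep.cyclen {w : F} {α β c e : ℤ} (h : GRep w α β c e) : (cyclen w : ℤ) = α + β := by
  rcases h with ⟨y, s, h1, h2, h3, -, -⟩ | ⟨L, s, h1, h2, h3, h4, -⟩
  · rw [cyclen_conj h1, cyclen_seg]; push_cast; rw [h2, h3]
  · rw [cyclen_conj h2, cyclen_valid h1]; push_cast; rw [h3, h4]

theorem ne_nil_of {L : List (List (Fin 2))} (hL : [] ∉ L) {p} (hp : p ∈ L) : p ≠ [] := by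
  rintro rfl; exact hL hp

/-- A valid list without pure powers of `b` stays valid under `σ`. -/
theorem valid_sigma {L : List (List (Fin 2))} (hL : Valid L) (h : ∀ p ∈ L, 0 < p.count 0) :
    Valid (L.map (hat 1)) := by
  refine ⟨by simpa using hL.even, ?_, chain_hat 1 hL⟩
  intro hm
  obtain ⟨p, hp, hp2⟩ := List.mem_map.1 hm
  have := hat_nil (ne_nil_of hL.ne hp) hp2
  have h0 := h p hp
  rw [this] at h0
  simp at h0

theorem GRep.sigma {w : F} {α β c e : ℤ} (h : GRep w α β c e) :
    GRep (σ w) α (β + α - 2 * c) c e := by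
  rcases h with ⟨y, s, h1, h2, h3, h4, h5⟩ | ⟨L, s, h1, h2, h3, h4, h5, h6, h7⟩
  · left
    obtain ⟨y', g1, g2, g3⟩ := phi_mono isPhi_sigma h1
    have g4 := g3 0 (by decide)
    exact ⟨y', s, g1, by omega, by omega, h4, h5⟩
  · right
    have hpos : ∀ p ∈ L, 0 < p.count 0 := by
      intro p hp
      rcases h7 p hp with h | h
      · omega
      · exact h.1
    have g1 := S_hat_self 1 h1.ne
    have g2 := S_hat_other 1 0 (by decide) L
    have key : ∀ p ∈ L, (hat 1 p).count 0 = p.count 0 ∧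
        (hat 1 p).count 1 + 1 = p.count 0 + p.count 1 := fun p hp =>
      ⟨hat_count_other 1 0 (by decide) p, hat_count_self 1 p (ne_nil_of h1.ne hp)⟩
    refine ⟨L.map (hat 1), s, valid_sigma h1 hpos,
      (phi_isConj σ h2).trans (phi_conj isPhi_sigma L s h1.ne h1.even), by omega, by omega,
      by simpa using h5, ?_, ?_⟩
    · rw [← h6, S_map]
      congr 1
      refine S_congr fun p hp => ?_
      have k := key p hp
      have k2 := h7 p hp
      have k3 := hpos p hp
      unfold mixed at k2
      unfold ee
      congr 1
      simp only [eq_iff_iff]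
      omega
    · intro q hq
      obtain ⟨p, hp, rfl⟩ := List.mem_map.1 hq
      have k := key p hp
      have k2 := h7 p hp
      unfold mixed at k2 ⊢
      omega

theorem GRep.tau {w : F} {α β c e : ℤ} (h : GRep w α β c e) :
    GRep (τ w) (α + β - 2 * c) β (c - e) 0 := by
  rcases h with ⟨y, s, h1, h2, h3, h4, h5⟩ | ⟨L, s, h1, h2, h3, h4, h5, h6, h7⟩
  · left
    obtain ⟨y', g1, g2, g3⟩ := phi_mono isPhi_tau h1
    have g4 := g3 1 (by decide)
    exact ⟨y', s, g1, by omega, by omega, by omega, rfl⟩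
  · have g1 := S_hat_self 0 h1.ne
    have g2 := S_hat_other 0 1 (by decide) L
    have key : ∀ p ∈ L, (hat 0 p).count 1 = p.count 1 ∧
        (hat 0 p).count 0 + 1 = p.count 0 + p.count 1 := fun p hp =>
      ⟨hat_count_other 0 1 (by decide) p, hat_count_self 0 p (ne_nil_of h1.ne hp)⟩
    have nil_iff : ∀ q : List (Fin 2), q = [] ↔ q.count 0 = 0 ∧ q.count 1 = 0 := by
      intro q
      have := count_add q
      rw [← List.length_eq_zero_iff]
      omega
    have hdd : S dd (L.map (hat 0)) = S ee L := by
      rw [S_map]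
      refine S_congr fun p hp => ?_
      have k := key p hp
      unfold dd ee
      congr 1
      rw [nil_iff, eq_iff_iff]
      omega
    have hmix : ∀ q ∈ L.map (hat 0), q = [] ∨ mixed q := by
      intro q hq
      obtain ⟨p, hp, rfl⟩ := List.mem_map.1 hq
      have k := key p hp
      have k2 := h7 p hp
      rw [nil_iff]
      unfold mixed at k2 ⊢
      omega
    have hw := (phi_isConj τ h2).trans (phi_conj isPhi_tau L s h1.ne h1.even)
    have hlen : (L.map (hat 0)).length = L.length := by simp
    rcases merge _ (L.map (hat 0)) s rfl (by simpa using h1.even) (chain_hat 0 h1) with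
      ⟨y, s', k1, k2, k3⟩ | ⟨L', s', k1, k2, k3, k4, k5, k6⟩
    · left
      have k20 := k2 0
      have k21 := k2 1
      exact ⟨y, s', hw.trans k1, by omega, by omega, by omega, rfl⟩
    · right
      have k30 := k3 0
      have k31 := k3 1
      refine ⟨L', s', k1, hw.trans k2, by omega, by omega, by omega, ?_, fun p hp => Or.inr (k6 hmix p hp)⟩
      rw [S_zero]
      · rfl
      · intro p hp
        have := k6 hmix p hp
        unfold mixed at this
        unfold ee
        rw [if_neg]
        omega

theorem tRep_init (u : F) : TRep u (cyclen u) := by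
  obtain ⟨v, hv, hv2⟩ := exists_cyclen u
  obtain ⟨L, h1, h2, h3⟩ := exists_list v.toWord
  have h4 : FreeGroup.mk (wd true L) = v := by rw [h2]; exact FreeGroup.mk_toWord
  rcases normalise _ L true rfl h1 with ⟨y, s, k⟩ | ⟨L', s, k1, k2, k3⟩
  · left
    exact ⟨y, s, hv.trans (h4 ▸ k)⟩
  · right
    refine ⟨L', s, k1, hv.trans (h4 ▸ k2), ?_⟩
    have : S tb L' ≤ S List.length L' := by
      refine S_le fun p _ => ?_
      have := count_add p
      unfold tb
      split_ifs <;> omega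
    have h5 : v.toWord.length = cyclen u := hv2
    omega

theorem TRep.tau {w : F} {t : ℕ} (h : TRep w t) : TRep (τ w) t := by
  rcases h with ⟨y, s, h1⟩ | ⟨L, s, h1, h2, h3⟩
  · obtain ⟨y', g1, -⟩ := phi_mono isPhi_tau h1
    exact Or.inl ⟨y', s, g1⟩
  · have hw := (phi_isConj τ h2).trans (phi_conj isPhi_tau L s h1.ne h1.even)
    have htb : S tb (L.map (hat 0)) ≤ S tb L := by
      rw [S_map]
      refine S_le fun p hp => ?_
      have k1 := hat_count_other 0 1 (by decide) p
      have k2 := hat_count_self 0 p (ne_nil_of h1.ne hp)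
      unfold tb
      split_ifs <;> omega
    rcases merge _ (L.map (hat 0)) s rfl (by simpa using h1.even) (chain_hat 0 h1) with
      ⟨y, s', k1, -⟩ | ⟨L', s', k1, k2, k3, k4, k5, k6⟩
    · exact Or.inl ⟨y, s', hw.trans k1⟩
    · exact Or.inr ⟨L', s', k1, hw.trans k2, by omega⟩

theorem tb_sigma {L : List (List (Fin 2))} (hL : [] ∉ L) :
    S tb (L.map (hat 1)) ≤ S tb L - 1 := by
  induction L with
  | nil => simp [S]
  | cons p L ih =>
    simp only [List.mem_cons, not_or] at hL
    have ih := ih hL.2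
    have k1 := hat_count_other 1 0 (by decide) p
    have k2 := hat_count_self 1 p (Ne.symm hL.1)
    have k3 : tb (hat 1 p) ≤ tb p - 1 := by
      unfold tb
      split_ifs <;> omega
    simp only [List.map_cons, S_cons]
    omega

theorem TRep.sigma {w : F} {t : ℕ} (h : TRep w t) : TRep (σ w) (t - 1) := by
  rcases h with ⟨y, s, h1⟩ | ⟨L, s, h1, h2, h3⟩
  · obtain ⟨y', g1, -⟩ := phi_mono isPhi_sigma h1
    exact Or.inl ⟨y', s, g1⟩
  · have hw := (phi_isConj σ h2).trans (phi_conj isPhi_sigma L s h1.ne h1.even)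
    have htb := tb_sigma h1.ne
    rcases merge _ (L.map (hat 1)) s rfl (by simpa using h1.even) (chain_hat 1 h1) with
      ⟨y, s', k1, -⟩ | ⟨L', s', k1, k2, k3, k4, k5, k6⟩
    · exact Or.inl ⟨y, s', hw.trans k1⟩
    · exact Or.inr ⟨L', s', k1, hw.trans k2, by omega⟩

theorem TRep.good {w : F} (h : TRep w 0) : ∃ α β c e, GRep (σ w) α β c e := by
  rcases h with ⟨y, s, h1⟩ | ⟨L, s, h1, h2, h3⟩
  · obtain ⟨y', g1, -⟩ := phi_mono isPhi_sigma h1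
    exact ⟨_, _, _, _, Or.inl ⟨y', s, g1, rfl, rfl, rfl, rfl⟩⟩
  · have hpos : ∀ p ∈ L, 0 < p.count 0 := by
      intro p hp
      have k : tb p ≤ S tb L := List.single_le_sum (by simp) _ (List.mem_map_of_mem hp)
      have k2 : 0 < p.length := List.length_pos_of_ne_nil (ne_nil_of h1.ne hp)
      rw [← count_add] at k2
      have k' : tb p = 0 := by omega
      unfold tb at k'
      split_ifs at k' <;> omega
    have hw := (phi_isConj σ h2).trans (phi_conj isPhi_sigma L s h1.ne h1.even)
    obtain ⟨c, hc⟩ := h1.even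
    refine ⟨_, _, c, _, Or.inr ⟨L.map (hat 1), s, valid_sigma h1 hpos, hw, rfl, rfl,
      by simp [hc]; ring, rfl, ?_⟩⟩
    intro q hq
    obtain ⟨p, hp, rfl⟩ := List.mem_map.1 hq
    have k0 := hpos p hp
    have k1 := hat_count_other 1 0 (by decide) p
    have k2 := hat_count_self 1 p (ne_nil_of h1.ne hp)
    unfold mixed
    omega

/-- State of a word: `0` means good, `t + 1` means controlled up to `t`. -/
def St (w : F) : ℕ → Prop
  | 0 => ∃ α β c e, GRep w α β c e
  | t + 1 => TRep w t

theorem St.sigma {w : F} {n : ℕ} (h : St w n) : St (σ w) (n - 1) := by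
  match n, h with
  | 0, ⟨_, _, _, _, h⟩ => exact ⟨_, _, _, _, h.sigma⟩
  | 1, h => exact TRep.good h
  | t + 2, h => exact TRep.sigma h

theorem St.tau {w : F} {n : ℕ} (h : St w n) : St (τ w) n := by
  match n, h with
  | 0, ⟨_, _, _, _, h⟩ => exact ⟨_, _, _, _, h.tau⟩
  | t + 1, h => exact TRep.tau h

theorem St.sigma_pow {w : F} {n : ℕ} (h : St w n) (k : ℕ) : St ((σ ^ k) w) (n - k) := by
  induction k with
  | zero => simpa using h
  | succ k ih =>
    rw [pow_succ', MulAut.mul_apply]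
    exact St.sigma ih

theorem St.tau_pow {w : F} {n : ℕ} (h : St w n) (k : ℕ) : St ((τ ^ k) w) n := by
  induction k with
  | zero => simpa using h
  | succ k ih =>
    rw [pow_succ', MulAut.mul_apply]
    exact St.tau ih

theorem St.chain {w : F} {n : ℕ} (h : St w n) (c : List (ℕ × ℕ)) :
    St (chainC1 c w) (n - sigmaCount c) := by
  induction c with
  | nil => simpa [chainC1, sigmaCount] using h
  | cons p c ih =>
    have h1 := (ih.sigma_pow p.1).tau_pow p.2
    have e1 : chainC1 (p :: c) w = (τ ^ p.2) ((σ ^ p.1) (chainC1 c w)) := by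
      simp [chainC1, MulAut.mul_apply]
    have e2 : n - sigmaCount (p :: c) = n - sigmaCount c - p.1 := by
      simp only [sigmaCount, List.map_cons, List.sum_cons]; omega
    rw [e1, e2]
    exact h1

theorem GRep.tau_pow {w : F} {α β c e : ℤ} (h : GRep w α β c e) (k : ℕ) :
    ∃ α', GRep ((τ ^ (k + 1)) w) α' β (c - e) 0 := by
  induction k with
  | zero => exact ⟨_, by simpa using h.tau⟩
  | succ k ih =>
    obtain ⟨α', h'⟩ := ih
    rw [pow_succ', MulAut.mul_apply]
    exact ⟨_, by simpa using h'.tau⟩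

/-- Lemma 4.1 (ii). -/
theorem stmt4 (u : F) (m : ℕ) (c₁ : List (ℕ × ℕ)) (hne : c₁ ≠ [])
    (hσ : cyclen u + 1 ≤ sigmaCount c₁) :
    (cyclen (τ ((τ ^ m * σ * chainC1 c₁) u)) : ℤ) - cyclen ((τ ^ m * σ * chainC1 c₁) u)
      = ((cyclen (τ ((τ ^ m * chainC1 c₁) u)) : ℤ) - cyclen ((τ ^ m * chainC1 c₁) u))
        + ((cyclen (σ (chainC1 c₁ u)) : ℤ) - cyclen (chainC1 c₁ u)) := by
  have h0 : St u (cyclen u + 1) := tRep_init u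
  have h1 := h0.chain c₁
  rw [Nat.sub_eq_zero_of_le hσ] at h1
  obtain ⟨α, β, c, e, h⟩ := h1
  simp only [MulAut.mul_apply]
  generalize chainC1 c₁ u = w at *
  have hs := h.sigma
  rw [hs.cyclen, h.cyclen]
  cases m with
  | zero =>
    simp only [pow_zero, MulAut.one_apply]
    rw [hs.tau.cyclen, hs.cyclen, h.tau.cyclen, h.cyclen]
    ring
  | succ m =>
    obtain ⟨x, hx⟩ := h.tau_pow m
    obtain ⟨y, hy⟩ := hs.tau_pow m
    rw [hx.tau.cyclen, hx.cyclen, hy.tau.cyclen, hy.cyclen]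
    ring
end
end

section
/- Let u ∈ F₂ and let ψ be a chain of type (C1) containing at least ‖u‖ factors of σ. Then (i) ‖σψ(u)‖ ≥ ‖ψ(u)‖, and (ii) ‖τψ(u)‖ ≥ ‖ψ(u)‖. -/
noncomputable section

/-! ### Stable length -/

open FreeGroup in
theorem cyc_data (w : F) : ∃ k r : ℕ, cyclen w = r ∧
    ∀ n : ℕ, len (w ^ (n + 1)) = 2 * k + (n + 1) * r := by
  have hlen : ∀ n : ℕ, len (w ^ (n + 1)) = 2 * (reduceCyclically.conjugator w.toWord).length
      + (n + 1) * (reduceCyclically w.toWord).length := by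
    intro n
    unfold len
    rw [toWord_pow, reduceCyclically.reduce_flatten_replicate_succ isReduced_toWord]
    simp
    ring
  refine ⟨(reduceCyclically.conjugator w.toWord).length,
    (reduceCyclically w.toWord).length, ?_, hlen⟩
  set k := (reduceCyclically.conjugator w.toWord).length with hk
  set r := (reduceCyclically w.toWord).length with hr
  have hmul : ∀ x y : F, len (x * y) ≤ len x + len y := fun x y => norm_mul_le x y
  have hinv : ∀ x : F, len x⁻¹ = len x := fun x => norm_inv_eq
  have hpow : ∀ (x : F) (n : ℕ), len (x ^ n) ≤ n * len x := by
    intro x n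
    induction n with
    | zero => simp [len]
    | succ n ih =>
      rw [pow_succ]
      have := hmul (x ^ n) x
      linarith [add_mul n 1 (len x)]
  have hlow : ∀ g : F, r ≤ len (g * w * g⁻¹) := by
    intro g
    by_contra hlt
    push Not at hlt
    have key : ∀ n : ℕ, (n + 1) * r ≤ (n + 1) * len (g * w * g⁻¹) + 2 * len g := by
      intro n
      have e : w ^ (n + 1) = g⁻¹ * (g * w * g⁻¹) ^ (n + 1) * g := by
        rw [conj_pow]; group
      have h1 := hlen n
      have h2 := hmul (g⁻¹ * (g * w * g⁻¹) ^ (n + 1)) g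
      have h3 := hmul g⁻¹ ((g * w * g⁻¹) ^ (n + 1))
      have h4 := hpow (g * w * g⁻¹) (n + 1)
      rw [← e] at h2
      rw [hinv] at h3
      linarith
    have := key (2 * len g)
    nlinarith
  have hmem : ∃ g : F, len (g * w * g⁻¹) = r := by
    refine ⟨(mk (reduceCyclically.conjugator w.toWord))⁻¹, le_antisymm ?_ (hlow _)⟩
    have e := congrArg mk (reduceCyclically.conj_conjugator_reduceCyclically w.toWord)
    rw [mk_toWord, ← mul_mk, ← mul_mk, ← inv_mk] at e
    have : (mk (reduceCyclically.conjugator w.toWord))⁻¹ * w *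
      ((mk (reduceCyclically.conjugator w.toWord))⁻¹)⁻¹ = mk (reduceCyclically w.toWord) := by
      have aux : ∀ g r w : F, g * r * g⁻¹ = w → g⁻¹ * w * (g⁻¹)⁻¹ = r := by
        rintro g r w rfl; group
      exact aux _ _ _ e
    rw [this]
    exact norm_mk_le
  unfold cyclen
  apply le_antisymm
  · exact Nat.sInf_le hmem
  · obtain ⟨g, hg⟩ := hmem
    refine le_csInf ⟨_, ⟨g, hg⟩⟩ ?_
    rintro n ⟨g', rfl⟩
    exact hlow g'

theorem cyclen_eq_zero {w : F} (h : cyclen w = 0) : w = 1 := by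
  obtain ⟨k, r, h1, h2⟩ := cyc_data w
  have a := h2 0
  have b := h2 1
  have hr : r = 0 := by omega
  subst hr
  have hlen : len (w ^ 1) = len (w ^ 2) := by simp_all
  by_contra hw
  have hc : w.toWord ≠ [] := by simpa using hw
  have hred : FreeGroup.reduceCyclically w.toWord = [] := by
    have e1 : ∀ n : ℕ, len (w ^ (n + 1)) = 2 * (FreeGroup.reduceCyclically.conjugator w.toWord).length
      + (n + 1) * (FreeGroup.reduceCyclically w.toWord).length := by
      intro n
      unfold len
      rw [FreeGroup.toWord_pow, FreeGroup.reduceCyclically.reduce_flatten_replicate_succ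
        FreeGroup.isReduced_toWord]
      simp
      ring
    have c := e1 0
    have d := e1 1
    simp only [zero_add, one_add_one_eq_two] at c d
    have : (FreeGroup.reduceCyclically w.toWord).length = 0 := by omega
    exact List.length_eq_zero_iff.1 this
  have e := congrArg FreeGroup.mk
    (FreeGroup.reduceCyclically.conj_conjugator_reduceCyclically w.toWord)
  rw [FreeGroup.mk_toWord, ← FreeGroup.mul_mk, ← FreeGroup.mul_mk, ← FreeGroup.inv_mk, hred] at e
  apply hw
  rw [← e, ← FreeGroup.one_eq_mk]
  group

theorem cyclen_one : cyclen (1 : F) = 0 := by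
  obtain ⟨k, r, h1, h2⟩ := cyc_data 1
  have := h2 0
  simp [len] at this
  omega

/-! ### Explicit reduced images -/

abbrev X := Fin 2 × Bool

def nv (x : X) : X := (x.1, !x.2)

def RR (p q : X) : List X → List X
  | [] => []
  | [x] => if x = p then [p, q] else if x = q then [q] else
      if x = nv p then [nv q, nv p] else [nv q]
  | x :: y :: l =>
      if x = p then (if y = nv q then p :: RR p q l else p :: q :: RR p q (y :: l))
      else if x = q then (if y = nv p then nv p :: RR p q l else q :: RR p q (y :: l))
      else if x = nv p then nv q :: nv p :: RR p q (y :: l)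
      else nv q :: RR p q (y :: l)

def gw (p q x y : X) : ℤ := if (x = p ∧ y = nv q) ∨ (x = q ∧ y = nv p) then 1 else 0

def cnt (g : X → X → ℤ) : List X → ℤ
  | [] => 0
  | [_] => 0
  | x :: y :: l => g x y + cnt g (y :: l)

def lc (p : X) : List X → ℤ
  | [] => 0
  | x :: l => (if x.1 = p.1 then 1 else 0) + lc p l

theorem letter_cases (p q : X) (h : p.1 ≠ q.1) (x : X) :
    x = p ∨ x = q ∨ x = nv p ∨ x = nv q := by
  revert p q x; unfold nv; decide

theorem ne_facts (p q : X) (h : p.1 ≠ q.1) :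
    p ≠ q ∧ p ≠ nv p ∧ p ≠ nv q ∧ q ≠ nv p ∧ q ≠ nv q ∧ nv p ≠ nv q := by
  revert p q; unfold nv; decide

theorem red_iff (x y : X) : (x.1 = y.1 → x.2 = y.2) ↔ y ≠ nv x := by
  revert x y; unfold nv; decide

theorem nv_nv (x : X) : nv (nv x) = x := by simp [nv]

def Rd : List X → Prop
  | [] => True
  | [_] => True
  | x :: y :: l => y ≠ nv x ∧ Rd (y :: l)

theorem Rd_iff (l : List X) : Rd l ↔ FreeGroup.IsReduced l := by
  induction l with
  | nil => simp [Rd]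
  | cons x l ih =>
    cases l with
    | nil => simp [Rd]
    | cons y l => rw [FreeGroup.isReduced_cons_cons, ← ih, red_iff]; rfl

theorem Rd_cons (x : X) (l : List X) : Rd (x :: l) ↔ (∀ y ∈ l.head?, y ≠ nv x) ∧ Rd l := by
  cases l <;> simp [Rd]

theorem RR_spec (p q : X) (h : p.1 ≠ q.1) (v : List X) : Rd v → Rd (RR p q v) ∧
    (∀ y ∈ (RR p q v).head?, ∃ x ∈ v.head?, (y = p → x = p) ∧ (y = q → x = q) ∧
      (y = nv q → x = nv p ∨ x = nv q) ∧ (y = nv p → x = q)) := by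
  obtain ⟨n1, n2, n3, n4, n5, n6⟩ := ne_facts p q h
  have hp := nv_nv p
  have hq := nv_nv q
  fun_induction RR p q v with
  | case1 => simp
  | case2 => simp [Rd]; grind
  | case3 => simp [Rd]; grind
  | case4 => simp [Rd]; grind
  | case5 x => 
    have := letter_cases p q h x
    simp [Rd]; grind
  | case6 l ih => simp only [Rd_cons, List.head?_cons, Option.mem_some_iff, forall_eq', exists_eq_left'] at *; grind
  | case7 y l =>
    have := letter_cases p q h y
    simp only [Rd_cons, List.head?_cons, Option.mem_some_iff, forall_eq', exists_eq_left'] at *; grind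
  | case8 l _ ih => simp only [Rd_cons, List.head?_cons, Option.mem_some_iff, forall_eq', exists_eq_left'] at *; grind
  | case9 y l =>
    have := letter_cases p q h y
    simp only [Rd_cons, List.head?_cons, Option.mem_some_iff, forall_eq', exists_eq_left'] at *; grind
  | case10 => simp only [Rd_cons, List.head?_cons, Option.mem_some_iff, forall_eq', exists_eq_left'] at *; grind
  | case11 x y l =>
    have := letter_cases p q h x
    simp only [Rd_cons, List.head?_cons, Option.mem_some_iff, forall_eq', exists_eq_left'] at *; grind

set_option linter.unusedSimpArgs false in
theorem RR_length (p q : X) (h : p.1 ≠ q.1) (v : List X) :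
    ((RR p q v).length : ℤ) = v.length + lc p v - 2 * cnt (gw p q) v := by
  obtain ⟨n1, n2, n3, n4, n5, n6⟩ := ne_facts p q h
  have hp1 : (nv p).1 = p.1 := rfl
  have hq1 : (nv q).1 = q.1 := rfl
  have hskip : ∀ x l, x ≠ p → x ≠ q → cnt (gw p q) (x :: l) = cnt (gw p q) l := by
    intro x l h1 h2
    cases l <;> simp [cnt, gw, h1, h2]
  have h' := h.symm
  have hsp : ∀ l, cnt (gw p q) (nv p :: l) = cnt (gw p q) l :=
    fun l => hskip _ l n2.symm n4.symm
  have hsq : ∀ l, cnt (gw p q) (nv q :: l) = cnt (gw p q) l :=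
    fun l => hskip _ l n3.symm n5.symm
  clear hskip
  fun_induction RR p q v with
  | case1 => simp [lc, cnt]
  | case2 => simp [lc, cnt]
  | case3 => simp [lc, cnt, h']
  | case4 => simp [lc, cnt, hp1]
  | case5 x h1 h2 h3 =>
    have : x = nv q := by have := letter_cases p q h x; tauto
    subst this
    simp [lc, cnt, hq1, h']
  | case6 l ih => simp [lc, cnt, hp1, hq1, gw, h, h', n1, n1.symm, n2, n2.symm, n3, n3.symm, n4, n4.symm, n5, n5.symm, n6, n6.symm, hsq, ih]; ring
  | case7 y l hy ih =>
    rw [List.length_cons, List.length_cons]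
    push_cast
    rw [ih]
    simp [lc, cnt, hp1, hq1, gw, h, h', n1, n1.symm, n2, n2.symm, n3, n3.symm, n4, n4.symm, n5, n5.symm, n6, n6.symm, hy]; ring
  | case8 l _ ih => simp [lc, cnt, hp1, hq1, gw, h, h', n1, n1.symm, n2, n2.symm, n3, n3.symm, n4, n4.symm, n5, n5.symm, n6, n6.symm, hsp, ih]; ring
  | case9 y l hy _ ih =>
    rw [List.length_cons]
    push_cast
    rw [ih]
    simp [lc, cnt, hp1, hq1, gw, h, h', n1, n1.symm, n2, n2.symm, n3, n3.symm, n4, n4.symm, n5, n5.symm, n6, n6.symm, hy]; ring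
  | case10 y l _ _ ih =>
    rw [hsp, List.length_cons, List.length_cons]
    push_cast
    rw [ih]
    simp [lc, cnt, hp1, hq1, gw, h, h', n1, n1.symm, n2, n2.symm, n3, n3.symm, n4, n4.symm, n5, n5.symm, n6, n6.symm, hsp]; ring
  | case11 x y l h1 h2 h3 ih =>
    have : x = nv q := by have := letter_cases p q h x; tauto
    subst this
    rw [hsq, List.length_cons]
    push_cast
    rw [ih]
    simp [lc, cnt, hp1, hq1, gw, h, h', n1, n1.symm, n2, n2.symm, n3, n3.symm, n4, n4.symm, n5, n5.symm, n6, n6.symm, hsp]; ring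

theorem mk_cons' (x : X) (l : List X) :
    (FreeGroup.mk (x :: l) : F) = FreeGroup.mk [x] * FreeGroup.mk l := by
  rw [FreeGroup.mul_mk]; rfl

theorem mk_nv (x : X) : (FreeGroup.mk [nv x] : F) = (FreeGroup.mk [x])⁻¹ := by
  rw [FreeGroup.inv_mk]; rfl

theorem RR_map (φ : MulAut F) (p q : X) (h : p.1 ≠ q.1)
    (h1 : φ (FreeGroup.mk [p]) = FreeGroup.mk [p] * FreeGroup.mk [q])
    (h2 : φ (FreeGroup.mk [q]) = FreeGroup.mk [q]) (v : List X) :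
    FreeGroup.mk (RR p q v) = φ (FreeGroup.mk v) := by
  have h3 : φ (FreeGroup.mk [nv p]) = (FreeGroup.mk [q])⁻¹ * (FreeGroup.mk [p])⁻¹ := by
    rw [mk_nv, map_inv, h1, mul_inv_rev]
  have h4 : φ (FreeGroup.mk [nv q]) = (FreeGroup.mk [q])⁻¹ := by
    rw [mk_nv, map_inv, h2]
  have h0 : (FreeGroup.mk ([] : List X) : F) = 1 := rfl
  fun_induction RR p q v with
  | case1 => rw [h0, map_one]
  | case2 => rw [mk_cons', h1]
  | case3 => rw [h2]
  | case4 => rw [mk_cons', h3, mk_nv, mk_nv]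
  | case5 x => 
    have : x = nv q := by have := letter_cases p q h x; tauto
    subst this
    rw [h4, mk_nv]
  | case6 l ih =>
    rw [mk_cons', ih, mk_cons' p (_ :: _), mk_cons' (nv q), map_mul, map_mul, h1, h4]; group
  | case7 y l _ ih =>
    rw [mk_cons', mk_cons' q, ih, mk_cons' p (_ :: _), map_mul, h1, mul_assoc]
  | case8 l _ ih =>
    rw [mk_cons', ih, mk_cons' q (_ :: _), mk_cons' (nv p) l, map_mul, map_mul, h2, h3, mk_nv]; group
  | case9 y l _ _ ih =>
    rw [mk_cons', ih, mk_cons' q (_ :: _), map_mul, h2]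
  | case10 y l _ _ ih =>
    rw [mk_cons', mk_cons' (nv p), ih, mk_cons' (nv p) (_ :: _), map_mul, h3, mk_nv, mk_nv, mul_assoc]
  | case11 x y l _ _ _ ih =>
    have : x = nv q := by have := letter_cases p q h x; tauto
    subst this
    rw [mk_cons', ih, mk_cons' (nv q) (_ :: _), map_mul, h4, mk_nv]

theorem len_formula (φ : MulAut F) (p q : X) (h : p.1 ≠ q.1)
    (h1 : φ (FreeGroup.mk [p]) = FreeGroup.mk [p] * FreeGroup.mk [q])
    (h2 : φ (FreeGroup.mk [q]) = FreeGroup.mk [q]) (v : F) :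
    (len (φ v) : ℤ) = len v + lc p v.toWord - 2 * cnt (gw p q) v.toWord := by
  have hv : Rd v.toWord := (Rd_iff _).2 FreeGroup.isReduced_toWord
  have e := RR_map φ p q h h1 h2 v.toWord
  rw [FreeGroup.mk_toWord] at e
  have : (φ v).toWord = RR p q v.toWord := by
    rw [← e, FreeGroup.toWord_mk]
    exact ((Rd_iff _).1 (RR_spec p q h _ hv).1).reduce_eq
  unfold len
  rw [this, RR_length p q h]

theorem cnt_le (p q : X) (h : p.1 ≠ q.1) (v : List X) :
    cnt (gw p q) v + cnt (gw p (nv q)) v ≤ lc p v ∧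
    (v.head? = some (nv p) → cnt (gw p q) v + cnt (gw p (nv q)) v + 1 ≤ lc p v) := by
  obtain ⟨n1, n2, n3, n4, n5, n6⟩ := ne_facts p q h
  have hp1 : (nv p).1 = p.1 := rfl
  have hq1 : (nv q).1 = q.1 := rfl
  have hq := nv_nv q
  induction v with
  | nil => simp [cnt, lc]
  | cons x l ih =>
    cases l with
    | nil => simp [cnt, lc]; grind
    | cons y l =>
      have := letter_cases p q h x
      have := letter_cases p q h y
      simp only [cnt, lc, gw] at *
      grind

def hh (x : X) : ℤ := if x = (1, true) ∨ x = (0, false) then 1 else 0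

theorem cnt_tel (v : List X) (hv : Rd v) : ∃ e : ℤ, -1 ≤ e ∧ e ≤ 1 ∧
    cnt (gw (0, true) (1, false)) v - cnt (gw (1, true) (0, false)) v = e := by
  have key : ∀ v : List X, Rd v → ∀ x ∈ v.head?, ∃ e : ℤ, 0 ≤ e ∧ e ≤ 1 ∧
      cnt (gw (0, true) (1, false)) v - cnt (gw (1, true) (0, false)) v = e - hh x := by
    intro v
    induction v with
    | nil => simp
    | cons x l ih =>
      intro hv z hz
      simp at hz
      subst hz
      cases l with
      | nil => exact ⟨hh x, by unfold hh; split_ifs <;> simp, by unfold hh; split_ifs <;> simp,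
          by simp [cnt]⟩
      | cons y l =>
        obtain ⟨e, e1, e2, e3⟩ := ih hv.2 y (by simp)
        refine ⟨e, e1, e2, ?_⟩
        have hg : ∀ x y : X, y ≠ nv x → gw (0, true) (1, false) x y - gw (1, true) (0, false) x y
          = hh y - hh x := by unfold gw hh nv; decide
        have := hg x y hv.1
        simp only [cnt]
        linarith
  cases v with
  | nil => exact ⟨0, by simp [cnt]⟩
  | cons x l =>
    obtain ⟨e, e1, e2, e3⟩ := key _ hv x (by simp)
    have : 0 ≤ hh x ∧ hh x ≤ 1 := by unfold hh; split_ifs <;> simp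
    exact ⟨e - hh x, by omega, by omega, e3⟩

theorem gw_comm (v : List X) :
    cnt (gw (0, true) (1, true)) v = cnt (gw (1, true) (0, true)) v := by
  have : gw (0, true) (1, true) = gw (1, true) (0, true) := by
    funext x y; revert x y; unfold gw nv; decide
  rw [this]

theorem σa : σ ga = ga * gb := by simp [σ, mkAut, ga, gb]
theorem σb : σ gb = gb := by simp [σ, mkAut, ga, gb]
theorem τa : τ ga = ga := by simp [τ, mkAut, ga, gb]
theorem τb : τ gb = gb * ga := by simp [τ, mkAut, ga, gb]
theorem σia : σ⁻¹ ga = ga * gb⁻¹ := by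
  rw [MulAut.inv_apply, MulEquiv.symm_apply_eq, map_mul, map_inv, σa, σb]; group
theorem σib : σ⁻¹ gb = gb := by
  rw [MulAut.inv_apply, MulEquiv.symm_apply_eq, σb]
theorem τia : τ⁻¹ ga = ga := by
  rw [MulAut.inv_apply, MulEquiv.symm_apply_eq, τa]
theorem τib : τ⁻¹ gb = gb * ga⁻¹ := by
  rw [MulAut.inv_apply, MulEquiv.symm_apply_eq, map_mul, map_inv, τa, τb]; group

theorem mka : (FreeGroup.mk [(0, true)] : F) = ga := rfl
theorem mkb : (FreeGroup.mk [(1, true)] : F) = gb := rfl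
theorem mkA : (FreeGroup.mk [(0, false)] : F) = ga⁻¹ := rfl
theorem mkB : (FreeGroup.mk [(1, false)] : F) = gb⁻¹ := rfl

theorem len_σ (v : F) : (len (σ v) : ℤ) =
    len v + lc (0, true) v.toWord - 2 * cnt (gw (0, true) (1, true)) v.toWord :=
  len_formula σ _ _ (by simp) (by rw [mka, mkb, σa]) (by rw [mkb, σb]) v
theorem len_σi (v : F) : (len (σ⁻¹ v) : ℤ) =
    len v + lc (0, true) v.toWord - 2 * cnt (gw (0, true) (1, false)) v.toWord :=
  len_formula σ⁻¹ _ _ (by simp) (by rw [mka, mkB, σia]) (by rw [mkB, map_inv, σib]) v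
theorem len_τ (v : F) : (len (τ v) : ℤ) =
    len v + lc (1, true) v.toWord - 2 * cnt (gw (1, true) (0, true)) v.toWord :=
  len_formula τ _ _ (by simp) (by rw [mka, mkb, τb]) (by rw [mka, τa]) v
theorem len_τi (v : F) : (len (τ⁻¹ v) : ℤ) =
    len v + lc (1, true) v.toWord - 2 * cnt (gw (1, true) (0, false)) v.toWord :=
  len_formula τ⁻¹ _ _ (by simp) (by rw [mkb, mkA, τib]) (by rw [mkA, map_inv, τia]) v

theorem lin_σ (v : F) : 2 * len v ≤ len (σ v) + len (σ⁻¹ v) := by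
  have := len_σ v
  have := len_σi v
  have h := (cnt_le (0, true) (1, true) (by simp) v.toWord).1
  have e : nv (1, true) = (1, false) := rfl
  rw [e] at h
  omega

theorem lin_τ (v : F) : 2 * len v ≤ len (τ v) + len (τ⁻¹ v) := by
  have := len_τ v
  have := len_τi v
  have h := (cnt_le (1, true) (0, true) (by simp) v.toWord).1
  have e : nv (0, true) = (0, false) := rfl
  rw [e] at h
  omega

theorem lin_B (v : F) : ∃ e : ℤ, -2 ≤ e ∧ e ≤ 2 ∧
    (len (σ v) : ℤ) - len (σ⁻¹ v) - (len (τ v) - len (τ⁻¹ v)) = e := by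
  have := len_σ v
  have := len_σi v
  have := len_τ v
  have := len_τi v
  have := gw_comm v.toWord
  obtain ⟨e, e1, e2, e3⟩ := cnt_tel v.toWord ((Rd_iff _).2 FreeGroup.isReduced_toWord)
  exact ⟨2 * e, by omega, by omega, by omega⟩

theorem lin_bound (x y : ℤ) (h : ∀ n : ℕ, 0 ≤ x + (n + 1) * y) : 0 ≤ y := by
  by_contra hy
  push Not at hy
  have := h x.natAbs
  have h2 : x ≤ (x.natAbs : ℤ) := by omega
  have h3 : (0 : ℤ) ≤ (x.natAbs : ℤ) := by omega
  nlinarith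

theorem cyc_σ (w : F) : 2 * (cyclen w : ℤ) ≤ cyclen (σ w) + cyclen (σ⁻¹ w) := by
  obtain ⟨k, r, h1, h2⟩ := cyc_data w
  obtain ⟨k', r', h1', h2'⟩ := cyc_data (σ w)
  obtain ⟨k'', r'', h1'', h2''⟩ := cyc_data (σ⁻¹ w)
  have := lin_bound (2 * k' + 2 * k'' - 4 * k) (r' + r'' - 2 * r) (by
    intro n
    have a := lin_σ (w ^ (n + 1))
    rw [map_pow, map_pow, h2, h2', h2''] at a
    zify at a
    linarith)
  omega

theorem cyc_τ (w : F) : 2 * (cyclen w : ℤ) ≤ cyclen (τ w) + cyclen (τ⁻¹ w) := by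
  obtain ⟨k, r, h1, h2⟩ := cyc_data w
  obtain ⟨k', r', h1', h2'⟩ := cyc_data (τ w)
  obtain ⟨k'', r'', h1'', h2''⟩ := cyc_data (τ⁻¹ w)
  have := lin_bound (2 * k' + 2 * k'' - 4 * k) (r' + r'' - 2 * r) (by
    intro n
    have a := lin_τ (w ^ (n + 1))
    rw [map_pow, map_pow, h2, h2', h2''] at a
    zify at a
    linarith)
  omega

/-- Twice the difference of the numbers of subwords `ab` and `ab⁻¹`. -/
def GG (w : F) : ℤ := cyclen (σ w) - cyclen (σ⁻¹ w)

theorem GG_eq (w : F) : GG w = cyclen (τ w) - cyclen (τ⁻¹ w) := by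
  unfold GG
  obtain ⟨k, r, h1, h2⟩ := cyc_data (σ w)
  obtain ⟨k', r', h1', h2'⟩ := cyc_data (σ⁻¹ w)
  obtain ⟨l, s, g1, g2⟩ := cyc_data (τ w)
  obtain ⟨l', s', g1', g2'⟩ := cyc_data (τ⁻¹ w)
  have main : ∀ n : ℕ, ∃ e : ℤ, -2 ≤ e ∧ e ≤ 2 ∧
      (2 * k - 2 * k' - 2 * l + 2 * l' : ℤ) + (n + 1) * (r - r' - s + s') = e := by
    intro n
    obtain ⟨e, e1, e2, e3⟩ := lin_B (w ^ (n + 1))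
    refine ⟨e, e1, e2, ?_⟩
    rw [map_pow, map_pow, map_pow, map_pow, h2, h2', g2, g2'] at e3
    push_cast at e3
    linarith
  have a := lin_bound (2 * k - 2 * k' - 2 * l + 2 * l' + 2) (r - r' - s + s') (by
    intro n
    obtain ⟨e, e1, e2, e3⟩ := main n
    linarith)
  have b := lin_bound (-(2 * k - 2 * k' - 2 * l + 2 * l') + 2) (-(r - r' - s + s')) (by
    intro n
    obtain ⟨e, e1, e2, e3⟩ := main n
    linarith)
  rw [h1, h1', g1, g1']
  omega

theorem GG_even (w : F) : ∃ m : ℤ, GG w = 2 * m := by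
  unfold GG
  obtain ⟨k, r, h1, h2⟩ := cyc_data (σ w)
  obtain ⟨k', r', h1', h2'⟩ := cyc_data (σ⁻¹ w)
  have a := h2 0
  have b := h2' 0
  have := len_σ w
  have := len_σi w
  simp only [zero_add, pow_one, one_mul] at a b
  rw [h1, h1']
  refine ⟨k' - k + cnt (gw (0, true) (1, false)) w.toWord
    - cnt (gw (0, true) (1, true)) w.toWord, ?_⟩
  omega

theorem step_σ (w : F) : GG w ≤ GG (σ w) ∧ 2 * (cyclen (σ w) : ℤ) - GG (σ w) ≤ 2 * cyclen w := by
  have a := cyc_σ w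
  have b := cyc_σ (σ w)
  have e : σ⁻¹ (σ w) = w := by simp
  unfold GG
  rw [e] at b ⊢
  constructor <;> linarith

theorem step_τ (w : F) : GG w ≤ GG (τ w) ∧ 2 * (cyclen (τ w) : ℤ) - GG (τ w) ≤ 2 * cyclen w := by
  have a := cyc_τ w
  have b := cyc_τ (τ w)
  have e : τ⁻¹ (τ w) = w := by simp
  rw [GG_eq, GG_eq]
  rw [e] at b ⊢
  constructor <;> linarith

def run : List Bool → F → F
  | [], w => w
  | true :: l, w => σ (run l w)
  | false :: l, w => τ (run l w)

theorem run_append (l m : List Bool) (w : F) : run (l ++ m) w = run l (run m w) := by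
  induction l with
  | nil => rfl
  | cons x l ih => cases x <;> simp [run, ih]

theorem run_σ (n : ℕ) (w : F) : run (List.replicate n true) w = (σ ^ n) w := by
  induction n with
  | zero => rfl
  | succ n ih => rw [List.replicate_succ, run, ih, pow_succ']; rfl

theorem run_τ (n : ℕ) (w : F) : run (List.replicate n false) w = (τ ^ n) w := by
  induction n with
  | zero => rfl
  | succ n ih => rw [List.replicate_succ, run, ih, pow_succ']; rfl

theorem exists_run (c : List (ℕ × ℕ)) (u : F) :
    ∃ l : List Bool, sigmaCount c ≤ l.length ∧ chainC1 c u = run l u := by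
  induction c with
  | nil => exact ⟨[], by simp [sigmaCount], by simp [chainC1, run]⟩
  | cons p c ih =>
    obtain ⟨l, h1, h2⟩ := ih
    refine ⟨List.replicate p.2 false ++ (List.replicate p.1 true ++ l), ?_, ?_⟩
    · simp [sigmaCount] at *
      omega
    · rw [run_append, run_append, ← h2, run_σ, run_τ]
      simp [chainC1]

theorem step_run (x : Bool) (l : List Bool) (u : F) :
    GG (run l u) ≤ GG (run (x :: l) u) ∧
    2 * (cyclen (run (x :: l) u) : ℤ) - GG (run (x :: l) u) ≤ 2 * cyclen (run l u) := by
  cases x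
  · exact step_τ _
  · exact step_σ _

theorem run_inv (u : F) (l : List Bool) (x : Bool) : 0 ≤ GG (run (x :: l) u) ∨
    2 * (cyclen (run (x :: l) u) : ℤ) - GG (run (x :: l) u) ≤ 2 * cyclen u - 2 * l.length := by
  induction l generalizing x with
  | nil => right; simpa [run] using (step_run x [] u).2
  | cons y l ih =>
    obtain ⟨s1, s2⟩ := step_run x (y :: l) u
    obtain ⟨m, hm⟩ := GG_even (run (y :: l) u)
    rcases ih y with h | h
    · left; omega
    · by_cases h0 : 0 ≤ GG (run (y :: l) u)
      · left; omega
      · right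
        simp only [List.length_cons]
        push_cast
        omega

theorem GG_one : GG 1 = 0 := by simp [GG]

theorem GG_run_nonneg (u : F) (l : List Bool) (h : cyclen u ≤ l.length) : 0 ≤ GG (run l u) := by
  cases l with
  | nil =>
    have : u = 1 := cyclen_eq_zero (by simpa using h)
    subst this
    simp [run, GG_one]
  | cons x l =>
    rcases run_inv u l x with h1 | h1
    · exact h1
    · by_contra hneg
      obtain ⟨m, hm⟩ := GG_even (run (x :: l) u)
      simp only [List.length_cons] at h
      have h0 : cyclen (run (x :: l) u) = 0 := by omega
      rw [cyclen_eq_zero h0, GG_one] at hneg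
      simp at hneg

/-- Lemma 4.3: applying `σ` or `τ` to a chain with at least `‖u‖` factors of `σ`
does not decrease the cyclic length. -/
theorem stmt5 (u : F) (c : List (ℕ × ℕ)) (hne : c ≠ [])
    (hσ : cyclen u ≤ sigmaCount c) :
    cyclen (chainC1 c u) ≤ cyclen (σ (chainC1 c u)) ∧
    cyclen (chainC1 c u) ≤ cyclen (τ (chainC1 c u)) := by
  obtain ⟨l, h1, h2⟩ := exists_run c u
  have h := GG_run_nonneg u l (hσ.trans h1)
  rw [← h2] at h
  have h3 := cyc_σ (chainC1 c u)
  have h4 := cyc_τ (chainC1 c u)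
  have h5 := GG_eq (chainC1 c u)
  rw [h5] at h
  unfold GG at h5
  constructor <;> omega
end
end
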